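/- arXiv:1706.00980 — 7 statements merged into one kernel-verified Lean document; each statement's English description precedes it below -/
import Mathlib

section
/- Let β > 0 and let λ ∈ [−1, 1]. For all real numbers x, y with βxy < 1 one has β·(λ ∘ x)·(λ ∘ y) < 1 (so the right-hand side below is defined) and λ ∘ (x ⊕ y) = (λ ∘ x) ⊕ (λ ∘ y). -/
/-- Generalized addition `x ⊕ y = (x + y)/(1 - β x y)`. -/
noncomputable def oplus (β x y : ℝ) : ℝ := (x + y) / (1 - β * x * y)

/-- Generalized multiplication by a scalar `λ ∘ x = (1/√β) tan (λ arctan (√β x))`. -/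
noncomputable def circ (β l x : ℝ) : ℝ :=
  (1 / Real.sqrt β) * Real.tan (l * Real.arctan (Real.sqrt β * x))

theorem cos_mul_arctan_pos {l : ℝ} (hl : l ∈ Set.Icc (-1 : ℝ) 1) (t : ℝ) :
    0 < Real.cos (l * Real.arctan t) := by
  apply Real.cos_pos_of_mem_Ioo
  rw [Set.mem_Ioo, ← abs_lt, abs_mul]
  calc |l| * |Real.arctan t| ≤ 1 * |Real.arctan t| := by
        gcongr
        exact abs_le.mpr hl
    _ < Real.pi / 2 := by
        rw [one_mul]
        exact abs_lt.mpr (Real.arctan_mem_Ioo t)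

theorem tan_mul_tan_lt_one {a b : ℝ} (ha : 0 < Real.cos a) (hb : 0 < Real.cos b)
    (hab : 0 < Real.cos (a + b)) : Real.tan a * Real.tan b < 1 := by
  rw [Real.cos_add] at hab
  rw [Real.tan_eq_sin_div_cos, Real.tan_eq_sin_div_cos, div_mul_div_comm,
    div_lt_one (mul_pos ha hb)]
  linarith

theorem tan_add_of_cos_ne_zero {a b : ℝ} (ha : Real.cos a ≠ 0) (hb : Real.cos b ≠ 0) :
    Real.tan (a + b) = (Real.tan a + Real.tan b) / (1 - Real.tan a * Real.tan b) := by
  refine Real.tan_add' ⟨fun k hk => ha ?_, fun k hk => hb ?_⟩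
  · exact Real.cos_eq_zero_iff.mpr ⟨k, hk⟩
  · exact Real.cos_eq_zero_iff.mpr ⟨k, hk⟩

theorem circ_oplus (β l x y : ℝ) (hβ : 0 < β) (hl : l ∈ Set.Icc (-1 : ℝ) 1)
    (hxy : β * x * y < 1) :
    β * circ β l x * circ β l y < 1 ∧
    circ β l (oplus β x y) = oplus β (circ β l x) (circ β l y) := by
  have hs : 0 < √β := Real.sqrt_pos.mpr hβ
  have hsq : √β * √β = β := Real.mul_self_sqrt hβ.le
  have hprod : √β * x * (√β * y) = β * x * y := by
    linear_combination x * y * hsq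
  have hadd : Real.arctan (√β * oplus β x y) =
      Real.arctan (√β * x) + Real.arctan (√β * y) := by
    rw [Real.arctan_add (hprod ▸ hxy), hprod, oplus, ← mul_add, mul_div_assoc]
  have ha := cos_mul_arctan_pos hl (√β * x)
  have hb := cos_mul_arctan_pos hl (√β * y)
  have hab := cos_mul_arctan_pos hl (√β * oplus β x y)
  rw [hadd, mul_add] at hab
  have hcirc : β * circ β l x * circ β l y =
      Real.tan (l * Real.arctan (√β * x)) * Real.tan (l * Real.arctan (√β * y)) := by
    simp only [circ]
    nth_rewrite 1 [← hsq]
    field_simp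
  refine ⟨hcirc ▸ tan_mul_tan_lt_one ha hb hab, ?_⟩
  rw [oplus.eq_1 β (circ β l x), hcirc, circ, hadd, mul_add,
    tan_add_of_cos_ne_zero ha.ne' hb.ne', circ, circ, ← mul_add, mul_div_assoc]
end

section
/- Let β > 0, let f : ℝ → ℂ be differentiable at the point p ∈ ℝ. Then the generalized difference quotient converges: lim_{η → 0} (f(p ⊕ η) − f(p))/η = (1 + βp²)·f′(p), where p ⊕ η = (p + η)/(1 − βpη) (which is defined for all sufficiently small η). -/
open Filter Topology

/-- The map `η ↦ x ⊕ η` has derivative `1 + β x ^ 2` at `η = 0`. -/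
theorem hasDerivAt_oplus_zero (β x : ℝ) :
    HasDerivAt (fun η : ℝ => oplus β x η) (1 + β * x ^ 2) 0 := by
  have hnum : HasDerivAt (fun η : ℝ => x + η) 1 0 := (hasDerivAt_id (0 : ℝ)).const_add x
  have hden : HasDerivAt (fun η : ℝ => 1 - β * x * η) (-(β * x * 1)) 0 :=
    ((hasDerivAt_id (0 : ℝ)).const_mul (β * x)).const_sub 1
  refine (hnum.div hden (by simp)).congr_deriv ?_
  simp
  ring

theorem generalized_deriv (β : ℝ) (hβ : 0 < β) (f : ℝ → ℂ) (p : ℝ) (f' : ℂ)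
    (hf : HasDerivAt f f' p) :
    Tendsto (fun η : ℝ => (f (oplus β p η) - f p) / (η : ℂ)) (𝓝[≠] 0)
      (𝓝 (((1 + β * p ^ 2 : ℝ) : ℂ) * f')) := by
  have h0 : oplus β p 0 = p := by simp [oplus]
  have hcomp : HasDerivAt (fun η : ℝ => f (oplus β p η)) ((1 + β * p ^ 2) • f') 0 :=
    HasDerivAt.scomp (0 : ℝ) (h0.symm ▸ hf) (hasDerivAt_oplus_zero β p)
  have hslope := hcomp.tendsto_slope_zero
  rw [← Complex.real_smul]
  refine hslope.congr fun η => ?_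
  rw [zero_add, h0, Complex.real_smul, Complex.ofReal_inv, div_eq_inv_mul]
end

section
/- Let β > 0 and let μ be the measure on ℝ with density dμ(p) = dp/(1 + βp²) with respect to Lebesgue measure. Then μ is invariant under generalized translations: for every η ∈ ℝ and every function f ∈ L¹(ℝ, μ), the function p ↦ f(p ⊕ η) (defined for almost every p, since p ⊕ η is defined except at the single point p = 1/(βη) when η ≠ 0) is μ-integrable and ∫_ℝ f(p ⊕ η) dμ(p) = ∫_ℝ f(p) dμ(p). -/
open MeasureTheory

/-- The measure `dμ(p) = dp / (1 + β p²)` on ℝ. -/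
noncomputable def gmeasure (β : ℝ) : Measure ℝ :=
  volume.withDensity (fun p => ENNReal.ofReal (1 / (1 + β * p ^ 2)))

lemma measurable_oplus (β η : ℝ) : Measurable (fun p => oplus β p η) := by
  unfold oplus
  fun_prop

/-- The derivative of a generalized translation away from its pole. -/
lemma hasDerivAt_oplus {β η p : ℝ} (hp : 1 - β * p * η ≠ 0) :
    HasDerivAt (fun p => oplus β p η) ((1 + β * η ^ 2) / (1 - β * p * η) ^ 2) p := by
  have hnum : HasDerivAt (fun p : ℝ => p + η) 1 p := (hasDerivAt_id p).add_const η
  have hden : HasDerivAt (fun p : ℝ => 1 - β * p * η) (-(β * 1 * η)) p :=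
    ((((hasDerivAt_id p).const_mul β).mul_const η).const_sub 1)
  refine (hnum.fun_div hden hp).congr_deriv ?_
  ring

lemma one_add_mul_sq_pos {β : ℝ} (hβ : 0 < β) (x : ℝ) : 0 < 1 + β * x ^ 2 := by
  positivity

lemma oplus_mul_cancel {β η p : ℝ} (hp : 1 - β * p * η ≠ 0) :
    oplus β p η * (1 - β * p * η) = p + η :=
  div_mul_cancel₀ _ hp

lemma one_add_mul_oplus {β η p : ℝ} (hp : 1 - β * p * η ≠ 0) :
    1 + β * oplus β p η * η = (1 + β * η ^ 2) / (1 - β * p * η) := by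
  rw [eq_div_iff hp]
  linear_combination β * η * oplus_mul_cancel hp

/-- Translation by `-η` undoes translation by `η` away from the pole. -/
lemma oplus_oplus_neg {β η p : ℝ} (hβ : 0 < β) (hp : 1 - β * p * η ≠ 0) :
    oplus β (oplus β p η) (-η) = p := by
  have hη := (one_add_mul_sq_pos hβ η).ne'
  have hden : 1 - β * oplus β p η * -η = (1 + β * η ^ 2) / (1 - β * p * η) := by
    rw [← one_add_mul_oplus hp]; ring
  have hnum : oplus β p η + -η = p * ((1 + β * η ^ 2) / (1 - β * p * η)) := by
    rw [mul_div_assoc', eq_div_iff hp]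
    linear_combination oplus_mul_cancel hp
  rw [oplus, hden, hnum, mul_div_cancel_right₀ _ (div_ne_zero hη hp)]

lemma abs_deriv_mul_density_oplus {β η p : ℝ} (hβ : 0 < β) (hp : 1 - β * p * η ≠ 0) :
    |(1 + β * η ^ 2) / (1 - β * p * η) ^ 2| * (1 / (1 + β * oplus β p η ^ 2)) =
      1 / (1 + β * p ^ 2) := by
  have hη := one_add_mul_sq_pos hβ η
  have hp' := one_add_mul_sq_pos hβ p
  have hsq : 1 + β * oplus β p η ^ 2 =
      (1 + β * η ^ 2) * (1 + β * p ^ 2) / (1 - β * p * η) ^ 2 := by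
    rw [eq_div_iff (pow_ne_zero 2 hp)]
    linear_combination β * (oplus β p η * (1 - β * p * η) + (p + η)) * oplus_mul_cancel hp
  rw [abs_of_nonneg (by positivity), hsq]
  generalize 1 - β * p * η = d at hp
  field_simp

/-- The pole of a generalized translation is a null set. -/
lemma ae_one_sub_mul_ne_zero (β η : ℝ) : ∀ᵐ p : ℝ, 1 - β * p * η ≠ 0 := by
  rw [ae_iff]
  refine Set.Subsingleton.measure_zero (fun p hp q hq => ?_) _
  simp only [ne_eq, not_not, Set.mem_ofPred_eq] at hp hq
  have hβη : β * η ≠ 0 := fun h => by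
    have : β * p * η = 0 := by rw [mul_right_comm, h, zero_mul]
    linarith
  exact mul_left_cancel₀ hβη (by linarith)

/-- Generalized translations preserve the measure `dp / (1 + β p²)`. -/
lemma measurePreserving_oplus {β : ℝ} (hβ : 0 < β) (η : ℝ) :
    MeasurePreserving (fun p => oplus β p η) (gmeasure β) (gmeasure β) := by
  have hT := measurable_oplus β η
  refine ⟨hT, Measure.ext fun A hA => ?_⟩
  set B : Set ℝ := {p | 1 - β * p * η ≠ 0} with hB
  have hBm : MeasurableSet B :=
    (measurableSet_singleton (0 : ℝ)).compl.preimage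
      (f := fun p : ℝ => 1 - β * p * η) (by fun_prop)
  have himage : (fun p => oplus β p η) '' ((fun p => oplus β p η) ⁻¹' A ∩ B) =
      A ∩ {q | 1 - β * q * -η ≠ 0} := by
    ext q
    constructor
    · rintro ⟨p, ⟨hpA, hpB⟩, rfl⟩
      refine ⟨hpA, ?_⟩
      have h := one_add_mul_oplus hpB
      have h' := div_ne_zero (one_add_mul_sq_pos hβ η).ne' hpB
      rw [← h] at h'
      simpa [sub_eq_add_neg] using h'
    · rintro ⟨hqA, hqB⟩
      have hinv := oplus_oplus_neg hβ hqB
      rw [neg_neg] at hinv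
      refine ⟨oplus β q (-η), ⟨by simpa [hinv] using hqA, ?_⟩, hinv⟩
      have h := one_add_mul_oplus hqB
      have h' := div_ne_zero (one_add_mul_sq_pos hβ (-η)).ne' hqB
      rw [← h] at h'
      simpa [hB, sub_eq_add_neg] using h'
  rw [Measure.map_apply hT hA, gmeasure, withDensity_apply _ (hT hA), withDensity_apply _ hA]
  have hsource : ((fun p => oplus β p η) ⁻¹' A ∩ B : Set ℝ) =ᵐ[volume]
      (fun p => oplus β p η) ⁻¹' A :=
    inter_ae_eq_left_of_ae_eq_univ (Filter.eventuallyEq_univ.2 (ae_one_sub_mul_ne_zero β η))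
  have htarget : (A ∩ {q | 1 - β * q * -η ≠ 0} : Set ℝ) =ᵐ[volume] A :=
    inter_ae_eq_left_of_ae_eq_univ (Filter.eventuallyEq_univ.2 (ae_one_sub_mul_ne_zero β (-η)))
  rw [← setLIntegral_congr hsource, ← setLIntegral_congr htarget, ← himage,
    lintegral_image_eq_lintegral_abs_deriv_mul ((hT hA).inter hBm)
      (fun p hp => (hasDerivAt_oplus hp.2).hasDerivWithinAt)
      (fun p hp q hq h => by
        rw [← oplus_oplus_neg hβ hp.2, ← oplus_oplus_neg hβ hq.2]
        exact congrArg (fun r => oplus β r (-η)) h)]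
  refine setLIntegral_congr_fun ((hT hA).inter hBm) fun p hp => ?_
  rw [← ENNReal.ofReal_mul (abs_nonneg _), abs_deriv_mul_density_oplus hβ hp.2]

theorem gmeasure_translation_invariant (β : ℝ) (hβ : 0 < β) (η : ℝ)
    (f : ℝ → ℂ) (hf : Integrable f (gmeasure β)) :
    Integrable (fun p => f (oplus β p η)) (gmeasure β) ∧
    ∫ p, f (oplus β p η) ∂(gmeasure β) = ∫ p, f p ∂(gmeasure β) := by
  have hT := measurePreserving_oplus hβ η
  refine ⟨hT.integrable_comp_of_integrable hf, ?_⟩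
  have hmap := hT.map_eq
  rw [← integral_map (φ := fun p => oplus β p η) hT.measurable.aemeasurable
    (hmap.symm ▸ hf.aestronglyMeasurable), hmap]
end

section
/- Let β > 0, ħ > 0, λ ∈ [0, 1]. Let φ : ℝ → ℂ be bounded and continuously differentiable with (1 + βp²)·|φ′(p)| bounded on ℝ. Then for every p ∈ ℝ the generalized λ-Wigner function of φ has the probabilistic marginal property: lim_{R → ∞} (1/(2πħ)) ∫_{−R}^{R} W_λ(φ, φ)(q, p) dq = |φ(p)|². -/
open MeasureTheory Filter Topology

/-- Generalized subtraction `x ⊖ y = x ⊕ (-y)`. -/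
noncomputable def ominus (β x y : ℝ) : ℝ := oplus β x (-y)

/-- The generalized λ-Wigner transform. -/
noncomputable def Wig (β hb l : ℝ) (φ ψ : ℝ → ℂ) (q p : ℝ) : ℂ :=
  ∫ p', (starRingEnd ℂ) (φ (ominus β p (circ β (1 - l) p')))
      * ψ (oplus β p (circ β l p'))
      * Complex.exp (Complex.I / hb * q *
          (Real.arctan (Real.sqrt β * p') / Real.sqrt β)) ∂(gmeasure β)

open scoped FourierTransform

/-- If `u` is integrable and `u x = O(x)` at the origin, then `u x / x` is integrable. -/
lemma integrable_div_of_isBigO_nhds_zero {u : ℝ → ℂ} (hu : Integrable u)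
    (h0 : u =O[𝓝 0] (fun x : ℝ => x)) : Integrable (fun x : ℝ => u x / x) := by
  obtain ⟨K, hK⟩ := h0.bound
  obtain ⟨δ, hδ, hball⟩ := Metric.eventually_nhds_iff_ball.mp hK
  have hind : Integrable ((Metric.ball (0 : ℝ) δ).indicator (fun _ => |K|)) :=
    (integrable_indicator_iff measurableSet_ball).mpr
      (integrableOn_const measure_ball_lt_top.ne)
  refine (hind.add (hu.norm.div_const δ)).mono'
    (hu.aestronglyMeasurable.div₀ Complex.measurable_ofReal.aestronglyMeasurable) ?_
  refine ae_of_all _ fun x => ?_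
  rw [norm_div, Complex.norm_real, Pi.add_apply]
  by_cases hx : x ∈ Metric.ball (0 : ℝ) δ
  · rw [Set.indicator_of_mem hx]
    have hle : ‖u x‖ / ‖x‖ ≤ |K| :=
      div_le_of_le_mul₀ (norm_nonneg _) (abs_nonneg _)
        ((hball x hx).trans (mul_le_mul_of_nonneg_right (le_abs_self K) (norm_nonneg _)))
    have : 0 ≤ ‖u x‖ / δ := by positivity
    linarith
  · rw [Set.indicator_of_notMem hx, zero_add]
    have hδx : δ ≤ ‖x‖ := by simpa using hx
    gcongr

/-- The Fourier transform of an integrable function is continuous. -/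
lemma continuous_fourier_of_integrable {u : ℝ → ℂ} (hu : Integrable u) : Continuous (𝓕 u) :=
  VectorFourier.fourierIntegral_continuous Real.continuous_fourierChar
    (innerSL ℝ).continuous₂ hu

/-- If `u` is integrable and `u x = O(x)` at the origin, then the symmetric partial integrals of
its Fourier transform tend to zero. -/
lemma tendsto_integral_fourier_zero {u : ℝ → ℂ} (hu : Integrable u)
    (h0 : u =O[𝓝 0] (fun x : ℝ => x)) :
    Tendsto (fun R : ℝ => ∫ w in (-R)..R, 𝓕 u w) atTop (𝓝 0) := by
  have hdiv := integrable_div_of_isBigO_nhds_zero hu h0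
  have hu0 : u 0 = 0 := h0.eq_zero_imp.self_of_nhds rfl
  have hmul : ∀ x : ℝ, (x : ℂ) * (u x / x) = u x := by
    intro x
    rcases eq_or_ne x 0 with rfl | hx
    · simp [hu0]
    · exact mul_div_cancel₀ _ (Complex.ofReal_ne_zero.mpr hx)
  have hpi : (-2 * Real.pi * Complex.I : ℂ) ≠ 0 := by simp [Real.pi_ne_zero]
  have hderiv : ∀ w, HasDerivAt (fun w => (-2 * Real.pi * Complex.I : ℂ)⁻¹ *
      𝓕 (fun x : ℝ => u x / x) w) (𝓕 u w) w := by
    intro w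
    have h := (Real.hasDerivAt_fourier hdiv
      (by simpa only [Complex.real_smul, hmul] using hu) w).const_mul
        ((-2 * Real.pi * Complex.I : ℂ)⁻¹)
    convert! h using 1
    simp only [smul_eq_mul, mul_assoc _ (Complex.ofReal _) (_ / _), hmul]
    rw [Real.fourier_real_eq, Real.fourier_real_eq, ← integral_const_mul]
    refine integral_congr_ae (ae_of_all _ fun x => ?_)
    simp only [Circle.smul_def, smul_eq_mul]
    field_simp
  have hRL := Real.zero_at_infty_fourier (fun x : ℝ => u x / x)
  rw [cocompact_eq_atBot_atTop, tendsto_sup] at hRL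
  have hlim := ((hRL.2.const_mul ((-2 * Real.pi * Complex.I : ℂ)⁻¹)).sub
    ((hRL.1.comp tendsto_neg_atTop_atBot).const_mul ((-2 * Real.pi * Complex.I : ℂ)⁻¹)))
  simp only [mul_zero, sub_zero] at hlim
  refine hlim.congr fun R => ?_
  exact (intervalIntegral.integral_eq_sub_of_hasDerivAt (fun w _ => hderiv w)
    ((continuous_fourier_of_integrable hu).intervalIntegrable _ _)).symm

lemma integrable_gaussian_pi :
    Integrable (fun x : ℝ => Complex.exp (-Real.pi * (x : ℂ) ^ 2)) :=
  integrable_cexp_neg_mul_sq (b := Real.pi) (by simp [Real.pi_pos])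

lemma fourier_gaussian_pi_self :
    𝓕 (fun x : ℝ => Complex.exp (-Real.pi * (x : ℂ) ^ 2)) =
      fun x : ℝ => Complex.exp (-Real.pi * (x : ℂ) ^ 2) := by
  simpa using fourier_gaussian_pi (b := 1) (by simp)

/-- Pointwise Fourier inversion at the origin, with symmetric partial integrals, for an integrable
function that is differentiable there. -/
theorem tendsto_integral_fourier_of_differentiableAt {f : ℝ → ℂ} (hf : Integrable f)
    (hd : DifferentiableAt ℝ f 0) :
    Tendsto (fun R : ℝ => ∫ w in (-R)..R, 𝓕 f w) atTop (𝓝 (f 0)) := by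
  set g : ℝ → ℂ := fun x => Complex.exp (-Real.pi * (x : ℂ) ^ 2) with hg
  have hgd : DifferentiableAt ℝ g 0 := by
    have : DifferentiableAt ℝ (fun x : ℝ => (x : ℂ)) 0 := Complex.ofRealCLM.differentiableAt
    fun_prop
  have hgi : Integrable g := integrable_gaussian_pi
  have hg1 : ∫ w, g w = 1 := by
    have h := congrFun fourier_gaussian_pi_self 0
    simpa [Real.fourier_real_eq, hg] using h
  have hui : Integrable (fun x => f x - f 0 * g x) := hf.sub (hgi.const_mul _)
  have hO : (fun x => f x - f 0 * g x) =O[𝓝 0] (fun x : ℝ => x) := by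
    have h := (hd.sub (hgd.const_mul (f 0))).isBigO_sub
    simpa [hg] using h
  have hzero := tendsto_integral_fourier_zero hui hO
  have hF : ∀ w, 𝓕 (fun x => f x - f 0 * g x) w = 𝓕 f w - f 0 * g w := by
    intro w
    have hgw : g w = 𝓕 g w := (congrFun fourier_gaussian_pi_self w).symm
    rw [hgw]
    simp only [Real.fourier_real_eq, smul_sub, ← mul_smul_comm]
    rw [integral_sub, integral_const_mul]
    · simpa [Circle.smul_def, mul_comm w] using
        (Real.fourierIntegral_convergent_iff (f := f) w).mpr hf
    · simpa [Circle.smul_def, mul_comm w] using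
        ((Real.fourierIntegral_convergent_iff (f := g) w).mpr hgi).const_mul (f 0)
  have hgauss : Tendsto (fun R : ℝ => f 0 * ∫ w in (-R)..R, g w) atTop (𝓝 (f 0)) := by
    simpa [hg1] using (intervalIntegral_tendsto_integral hgi tendsto_neg_atTop_atBot
      tendsto_id).const_mul (f 0)
  have hsum := hzero.add hgauss
  rw [zero_add] at hsum
  refine hsum.congr fun R => ?_
  simp only [hF]
  rw [intervalIntegral.integral_sub
      ((continuous_fourier_of_integrable hf).intervalIntegrable _ _)
      ((hgi.const_mul _).intervalIntegrable), intervalIntegral.integral_const_mul,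
    sub_add_cancel]

/-- Change of variables `u = arctan (√β p') / √β` for the measure `dp' / (1 + β p'²)`. -/
lemma integral_gmeasure_arctan {β : ℝ} (hβ : 0 < β) (g : ℝ → ℂ) :
    ∫ x, g (Real.arctan (Real.sqrt β * x) / Real.sqrt β) ∂(gmeasure β) =
      ∫ u in Set.range (fun x : ℝ => Real.arctan (Real.sqrt β * x) / Real.sqrt β), g u := by
  have hs : 0 < Real.sqrt β := Real.sqrt_pos.mpr hβ
  have hderiv : ∀ x ∈ (Set.univ : Set ℝ), HasDerivWithinAt
      (fun x : ℝ => Real.arctan (Real.sqrt β * x) / Real.sqrt β) (1 / (1 + β * x ^ 2))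
      Set.univ x := by
    intro x _
    have h := (((hasDerivAt_id x).const_mul (Real.sqrt β)).arctan.div_const (Real.sqrt β))
    refine HasDerivAt.hasDerivWithinAt ?_
    convert! h using 1
    simp only [id, mul_pow, Real.sq_sqrt hβ.le]
    field_simp
  have hinj : Set.InjOn (fun x : ℝ => Real.arctan (Real.sqrt β * x) / Real.sqrt β) Set.univ := by
    intro x _ y _ hxy
    exact mul_left_cancel₀ hs.ne' (Real.arctan_injective ((div_left_inj' hs.ne').mp hxy))
  rw [← Set.image_univ,
    integral_image_eq_integral_abs_deriv_smul MeasurableSet.univ hderiv hinj, gmeasure,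
    integral_withDensity_eq_integral_toReal_smul (by fun_prop)
      (ae_of_all _ fun _ => ENNReal.ofReal_lt_top), Measure.restrict_univ]
  refine integral_congr_ae (ae_of_all _ fun x => ?_)
  have hx : 0 ≤ 1 / (1 + β * x ^ 2) := by positivity
  simp only [ENNReal.toReal_ofReal hx, abs_of_nonneg hx]

lemma range_arctan_div_sqrt {β : ℝ} (hβ : 0 < β) :
    Set.range (fun x : ℝ => Real.arctan (Real.sqrt β * x) / Real.sqrt β) =
      Set.Ioo (-(Real.pi / 2) / Real.sqrt β) (Real.pi / 2 / Real.sqrt β) := by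
  have hs : 0 < Real.sqrt β := Real.sqrt_pos.mpr hβ
  ext u
  simp only [Set.mem_range, Set.mem_Ioo, div_lt_iff₀ hs, lt_div_iff₀ hs]
  constructor
  · rintro ⟨x, rfl⟩
    rw [div_mul_cancel₀ _ hs.ne']
    exact ⟨Real.neg_pi_div_two_lt_arctan _, Real.arctan_lt_pi_div_two _⟩
  · rintro ⟨h1, h2⟩
    refine ⟨Real.tan (u * Real.sqrt β) / Real.sqrt β, ?_⟩
    rw [mul_div_cancel₀ _ hs.ne', Real.arctan_tan h1 h2, mul_div_cancel_right₀ _ hs.ne']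

/-- The integrand of the Wigner transform of `φ` in the variable `u = arctan (√β p') / √β`,
without its phase. -/
noncomputable def wignerAmplitude (β l : ℝ) (φ : ℝ → ℂ) (p u : ℝ) : ℂ :=
  (starRingEnd ℂ) (φ (ominus β p (1 / Real.sqrt β * Real.tan ((1 - l) * (Real.sqrt β * u)))))
    * φ (oplus β p (1 / Real.sqrt β * Real.tan (l * (Real.sqrt β * u))))

lemma measurable_wignerAmplitude (β l : ℝ) {φ : ℝ → ℂ} (hφ : Continuous φ) (p : ℝ) :
    Measurable (wignerAmplitude β l φ p) := by
  have htan : Measurable Real.tan := by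
    simp only [funext Real.tan_eq_sin_div_cos]
    fun_prop
  have hφm := hφ.measurable
  unfold wignerAmplitude ominus oplus
  refine (Complex.continuous_conj.measurable.comp (hφm.comp ?_)).mul (hφm.comp ?_) <;> fun_prop

lemma wignerAmplitude_zero (β l : ℝ) (φ : ℝ → ℂ) (p : ℝ) :
    wignerAmplitude β l φ p 0 = ((‖φ p‖ ^ 2 : ℝ) : ℂ) := by
  simp [wignerAmplitude, ominus, oplus, Complex.conj_mul']

lemma differentiableAt_wignerAmplitude (β l : ℝ) {φ : ℝ → ℂ} (hφ : Differentiable ℝ φ) (p : ℝ) :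
    DifferentiableAt ℝ (wignerAmplitude β l φ p) 0 := by
  have htan : ∀ c : ℝ, DifferentiableAt ℝ
      (fun u => 1 / Real.sqrt β * Real.tan (c * (Real.sqrt β * u))) 0 := by
    intro c
    refine DifferentiableAt.const_mul (DifferentiableAt.comp (g := Real.tan) 0 ?_ (by fun_prop)) _
    simp [Real.differentiableAt_tan]
  have hop : ∀ {y : ℝ → ℝ}, DifferentiableAt ℝ y 0 → y 0 = 0 →
      DifferentiableAt ℝ (fun u => φ (oplus β p (y u))) 0 := by
    intro y hy hy0
    refine (hφ _).comp 0 ?_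
    unfold oplus
    exact (hy.const_add p).div ((hy.const_mul _).const_sub 1) (by simp [hy0])
  unfold wignerAmplitude ominus
  refine DifferentiableAt.mul ?_ (hop (htan l) (by simp))
  exact Complex.conjCLE.differentiableAt.comp 0 (hop (htan (1 - l)).neg (by simp))

/-- The Wigner transform is the Fourier transform of the truncated amplitude. -/
lemma Wig_eq_fourier {β hb : ℝ} (hβ : 0 < β) (hhb : 0 < hb) (l : ℝ) (φ : ℝ → ℂ) (q p : ℝ) :
    Wig β hb l φ φ q p =
      𝓕 ((Set.Ioo (-(Real.pi / 2) / Real.sqrt β) (Real.pi / 2 / Real.sqrt β)).indicator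
        (wignerAmplitude β l φ p)) (-(1 / (2 * Real.pi * hb)) * q) := by
  have hs : 0 < Real.sqrt β := Real.sqrt_pos.mpr hβ
  have hpi : (Real.pi : ℂ) ≠ 0 := Complex.ofReal_ne_zero.mpr Real.pi_ne_zero
  have hhb' : (hb : ℂ) ≠ 0 := Complex.ofReal_ne_zero.mpr hhb.ne'
  have hW : Wig β hb l φ φ q p = ∫ x, (fun u : ℝ => wignerAmplitude β l φ p u *
      Complex.exp (Complex.I / hb * q * u))
        (Real.arctan (Real.sqrt β * x) / Real.sqrt β) ∂(gmeasure β) := by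
    simp only [Wig, wignerAmplitude, circ, mul_div_cancel₀ _ hs.ne', Complex.ofReal_div]
  rw [hW, integral_gmeasure_arctan hβ (fun u : ℝ => wignerAmplitude β l φ p u *
      Complex.exp (Complex.I / hb * q * u)), range_arctan_div_sqrt hβ,
    ← integral_indicator measurableSet_Ioo, Real.fourier_real_eq_integral_exp_smul]
  refine integral_congr_ae (ae_of_all _ fun u => ?_)
  simp only [Set.indicator_apply]
  split_ifs
  · rw [smul_eq_mul, mul_comm]
    congr 2
    push_cast
    field_simp
  · simp

theorem wigner_marginal (β hb l : ℝ) (hβ : 0 < β) (hhb : 0 < hb)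
    (hl : l ∈ Set.Icc (0 : ℝ) 1) (φ : ℝ → ℂ)
    (hφb : ∃ C, ∀ p, ‖φ p‖ ≤ C) (hφ : ContDiff ℝ 1 φ)
    (hφ'b : ∃ C, ∀ p, (1 + β * p ^ 2) * ‖deriv φ p‖ ≤ C) (p : ℝ) :
    Tendsto (fun R : ℝ => (1 / (2 * Real.pi * hb)) *
        ∫ q in (-R)..R, Wig β hb l φ φ q p) atTop
      (𝓝 ((‖φ p‖ ^ 2 : ℝ) : ℂ)) := by
  obtain ⟨C, hC⟩ := hφb
  have hs : 0 < Real.sqrt β := Real.sqrt_pos.mpr hβ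
  have hc : 0 < 1 / (2 * Real.pi * hb) := by positivity
  set s := Set.Ioo (-(Real.pi / 2) / Real.sqrt β) (Real.pi / 2 / Real.sqrt β)
  have h0 : (0 : ℝ) ∈ s :=
    ⟨div_neg_of_neg_of_pos (neg_neg_of_pos Real.pi_div_two_pos) hs,
      div_pos Real.pi_div_two_pos hs⟩
  have hint : Integrable (s.indicator (wignerAmplitude β l φ p)) := by
    rw [integrable_indicator_iff measurableSet_Ioo]
    refine Measure.integrableOn_of_bounded (M := C * C) measure_Ioo_lt_top.ne
      (measurable_wignerAmplitude β l hφ.continuous p).aestronglyMeasurable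
      (ae_of_all _ fun u => ?_)
    rw [wignerAmplitude, norm_mul, RCLike.norm_conj]
    exact mul_le_mul (hC _) (hC _) (norm_nonneg _) ((norm_nonneg _).trans (hC 0))
  have hdiff : DifferentiableAt ℝ (s.indicator (wignerAmplitude β l φ p)) 0 := by
    refine (differentiableAt_wignerAmplitude β l (hφ.differentiable one_ne_zero)
      p).congr_of_eventuallyEq ?_
    filter_upwards [isOpen_Ioo.mem_nhds h0] with u hu
    exact Set.indicator_of_mem hu _
  have hlim := (tendsto_integral_fourier_of_differentiableAt hint hdiff).comp
    (tendsto_id.const_mul_atTop hc)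
  rw [Set.indicator_of_mem h0, wignerAmplitude_zero] at hlim
  refine hlim.congr fun R => ?_
  have hcv := intervalIntegral.smul_integral_comp_mul_left (a := -R) (b := R)
    (𝓕 (s.indicator (wignerAmplitude β l φ p))) (-(1 / (2 * Real.pi * hb)))
  simp only [Wig_eq_fourier hβ hhb, Function.comp_apply, id]
  rw [neg_mul_neg, neg_mul, neg_smul] at hcv
  rw [intervalIntegral.integral_symm, ← hcv, neg_neg, Complex.real_smul]
  push_cast
  rfl
end

section
/- Let β > 0 and a ∈ ℝ. Then ∫_ℝ e^{−i·a·arctan(√β p)} / (1 + βp²) dp = (π/√β)·sinc(a/2), where sinc(x) = sin(πx)/(πx) for x ≠ 0 and sinc(0) = 1, and arctan is the principal branch with values in (−π/2, π/2). -/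
open MeasureTheory

/-- The normalized cardinal sine: `sinc x = sin (π x) / (π x)` for `x ≠ 0`, `sinc 0 = 1`. -/
noncomputable def sinc (x : ℝ) : ℝ :=
  if x = 0 then 1 else Real.sin (Real.pi * x) / (Real.pi * x)

/-- The substitution `θ = arctan x` on the whole real line. -/
theorem integral_inv_one_add_sq_smul_comp_arctan {E : Type*} [NormedAddCommGroup E]
    [NormedSpace ℝ E] [CompleteSpace E] {g : ℝ → E} (hg : Continuous g) :
    ∫ x : ℝ, (1 + x ^ 2)⁻¹ • g (Real.arctan x)
      = ∫ θ in -(Real.pi / 2)..Real.pi / 2, g θ := by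
  have hG (θ : ℝ) : HasDerivAt (fun u => ∫ t in (0 : ℝ)..u, g t) (g θ) θ :=
    hg.integral_hasStrictDerivAt 0 θ |>.hasDerivAt
  obtain ⟨C, hC⟩ := (isCompact_Icc (a := -(Real.pi / 2))
    (b := Real.pi / 2)).exists_bound_of_continuousOn hg.continuousOn
  have hint : Integrable fun x : ℝ => (1 + x ^ 2)⁻¹ • g (Real.arctan x) :=
    integrable_inv_one_add_sq.smul_bdd C
      (hg.comp Real.continuous_arctan).aestronglyMeasurable
      (.of_forall fun x => hC _
        ⟨(Real.neg_pi_div_two_lt_arctan x).le, (Real.arctan_lt_pi_div_two x).le⟩)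
  rw [integral_of_hasDerivAt_of_tendsto
    (fun x => by simpa using (hG (Real.arctan x)).scomp x (Real.hasDerivAt_arctan x)) hint
    ((hG _).continuousAt.tendsto.comp
      (tendsto_nhds_of_tendsto_nhdsWithin Real.tendsto_arctan_atBot))
    ((hG _).continuousAt.tendsto.comp
      (tendsto_nhds_of_tendsto_nhdsWithin Real.tendsto_arctan_atTop))]
  exact intervalIntegral.integral_interval_sub_left
    (hg.intervalIntegrable _ _) (hg.intervalIntegrable _ _)

/-- The Fourier transform of the indicator function of `[-π/2, π/2]`. -/
theorem integral_exp_neg_I_mul_eq_pi_mul_sinc (a : ℝ) :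
    ∫ θ in -(Real.pi / 2)..Real.pi / 2, Complex.exp (-(Complex.I * a * θ))
      = ((Real.pi * sinc (a / 2) : ℝ) : ℂ) := by
  by_cases ha : a = 0
  · simp [ha, sinc]
  have hc : -(Complex.I * a) ≠ 0 := by simp [ha]
  have ha' : (a : ℂ) ≠ 0 := by exact_mod_cast ha
  have hπ : (Real.pi : ℂ) ≠ 0 := by exact_mod_cast Real.pi_ne_zero
  have hsin := Complex.two_sin (Real.pi * (a / 2))
  simp_rw [← neg_mul (Complex.I * (a : ℂ))]
  rw [integral_exp_mul_complex hc, sinc, if_neg (by simpa using ha)]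
  push_cast
  rw [show -(Complex.I * a) * (Real.pi / 2) = -(Real.pi * (a / 2)) * Complex.I by ring,
    show -(Complex.I * a) * -(Real.pi / 2) = Real.pi * (a / 2) * Complex.I by ring]
  field_simp at hsin ⊢
  rw [hsin]
  linear_combination -(Complex.exp (-(Real.pi * a * Complex.I / 2)) -
    Complex.exp (Real.pi * a * Complex.I / 2)) * Complex.I_sq

theorem integral_exp_arctan (β a : ℝ) (hβ : 0 < β) :
    ∫ p : ℝ, Complex.exp (-(Complex.I * a * Real.arctan (Real.sqrt β * p)))
        / ((1 + β * p ^ 2 : ℝ) : ℂ)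
      = ((Real.pi / Real.sqrt β * sinc (a / 2) : ℝ) : ℂ) := by
  have hcont : Continuous fun θ : ℝ => Complex.exp (-(Complex.I * a * θ)) := by fun_prop
  have hscale := Measure.integral_comp_mul_left
    (fun x : ℝ => (1 + x ^ 2)⁻¹ • Complex.exp (-(Complex.I * a * Real.arctan x))) (Real.sqrt β)
  rw [integral_inv_one_add_sq_smul_comp_arctan hcont, integral_exp_neg_I_mul_eq_pi_mul_sinc,
    abs_of_nonneg (by positivity), Complex.real_smul, ← Complex.ofReal_mul, ← mul_assoc,
    inv_mul_eq_div] at hscale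
  rw [← hscale]
  congr with p
  rw [mul_pow, Real.sq_sqrt hβ.le, Complex.real_smul, Complex.ofReal_inv, div_eq_inv_mul]
end

section
/- Let β > 0, ħ > 0, ξ ∈ ℝ. Define the maximal-localization momentum wave function ψ(p) = √(2√β/π)·(1 + βp²)^{−1/2}·e^{−(i/ħ)·ξ·arctan(√β p)/√β}. Then for every q ∈ ℝ and every p ∈ ℝ with βp² ≤ 1, the λ = 1/2 Wigner function of ψ is given by W_{1/2}(ψ, ψ)(q, p) = ((1 − βp²)/(1 + βp²))·sinc(u) + (1/2)·(sinc(1/2 − u) + sinc(1/2 + u)), where u = (q − ξ)/(2ħ√β). -/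
open MeasureTheory

/-- The maximal-localization momentum wave function around position ξ. -/
noncomputable def psiML (β hb ξ : ℝ) (p : ℝ) : ℂ :=
  (Real.sqrt (2 * Real.sqrt β / Real.pi) : ℝ)
    * ((Real.sqrt (1 + β * p ^ 2))⁻¹ : ℝ)
    * Complex.exp (-(Complex.I / hb) * ξ *
        (Real.arctan (Real.sqrt β * p) / Real.sqrt β))

open Set in
lemma integral_gmeasure_eq_setIntegral_tan {β : ℝ} (hβ : 0 < β) (F : ℝ → ℂ) :
    ∫ x, F x ∂(gmeasure β)
      = ∫ θ in Ioo (-(Real.pi / 2)) (Real.pi / 2),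
          ((1 / √β : ℝ) : ℂ) * F (Real.tan θ / √β) := by
  have hs : 0 < √β := Real.sqrt_pos.2 hβ
  have hsq : √β ^ 2 = β := Real.sq_sqrt hβ.le
  have himage : (fun θ => Real.tan θ / √β) '' Ioo (-(Real.pi / 2)) (Real.pi / 2) = univ := by
    refine eq_univ_of_forall fun y => ⟨Real.arctan (√β * y), Real.arctan_mem_Ioo _, ?_⟩
    simp only [Real.tan_arctan]
    field_simp
  have hinj : InjOn (fun θ => Real.tan θ / √β) (Ioo (-(Real.pi / 2)) (Real.pi / 2)) := by
    intro x hx y hy hxy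
    exact Real.injOn_tan hx hy ((div_left_inj' hs.ne').1 hxy)
  have hderiv : ∀ θ ∈ Ioo (-(Real.pi / 2)) (Real.pi / 2),
      HasDerivWithinAt (fun θ => Real.tan θ / √β) (1 / Real.cos θ ^ 2 / √β)
        (Ioo (-(Real.pi / 2)) (Real.pi / 2)) θ := fun θ hθ =>
    ((Real.hasDerivAt_tan (Real.cos_pos_of_mem_Ioo hθ).ne').div_const _).hasDerivWithinAt
  have hmeas : Measurable fun x : ℝ => ENNReal.ofReal (1 / (1 + β * x ^ 2)) := by fun_prop
  rw [gmeasure, integral_withDensity_eq_integral_toReal_smul hmeas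
    (Filter.Eventually.of_forall fun _ => ENNReal.ofReal_lt_top), ← setIntegral_univ, ← himage,
    integral_image_eq_integral_abs_deriv_smul measurableSet_Ioo hderiv hinj]
  refine setIntegral_congr_fun measurableSet_Ioo fun θ hθ => ?_
  have hc := Real.cos_pos_of_mem_Ioo hθ
  have hden : 1 + β * (Real.tan θ / √β) ^ 2 = 1 / Real.cos θ ^ 2 := by
    rw [div_pow, hsq, mul_div_cancel₀ _ hβ.ne', one_div, ← Real.inv_one_add_tan_sq hc.ne', inv_inv]
  simp only [hden]
  rw [ENNReal.toReal_ofReal (by positivity), abs_of_pos (by positivity), smul_smul,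
    Complex.real_smul]
  congr 2
  field_simp

lemma oplus_tan_div_sqrt {β : ℝ} (hβ : 0 < β) {a b : ℝ} (ha : Real.cos a ≠ 0)
    (hb : Real.cos b ≠ 0) :
    oplus β (Real.tan a / √β) (Real.tan b / √β) = Real.tan (a + b) / √β := by
  have hs : 0 < √β := Real.sqrt_pos.2 hβ
  have hprod : β * (Real.tan a / √β) * (Real.tan b / √β) = Real.tan a * Real.tan b := by
    field_simp
    rw [Real.sq_sqrt hβ.le]
    ring
  rw [oplus, hprod, Real.tan_add' ⟨Real.cos_ne_zero_iff.1 ha, Real.cos_ne_zero_iff.1 hb⟩]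
  ring

lemma psiML_tan_div_sqrt {β : ℝ} (hβ : 0 < β) (hb ξ : ℝ) {x : ℝ}
    (hx : x ∈ Set.Ioo (-(Real.pi / 2)) (Real.pi / 2)) :
    psiML β hb ξ (Real.tan x / √β)
      = (√(2 * √β / Real.pi) : ℝ) * (Real.cos x : ℝ)
        * Complex.exp ((-(ξ * x / (hb * √β)) : ℝ) * Complex.I) := by
  have hs : 0 < √β := Real.sqrt_pos.2 hβ
  have hsq : √β ^ 2 = β := Real.sq_sqrt hβ.le
  have hc := Real.cos_pos_of_mem_Ioo hx
  have hden : (√(1 + β * (Real.tan x / √β) ^ 2))⁻¹ = Real.cos x := by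
    rw [div_pow, hsq, mul_div_cancel₀ _ hβ.ne', Real.inv_sqrt_one_add_tan_sq hc]
  rw [psiML, hden, mul_div_cancel₀ _ hs.ne', Real.arctan_tan hx.1 hx.2]
  congr 2
  push_cast
  ring

lemma intervalIntegral_exp_eq_sinc (u : ℝ) :
    ∫ θ in (-(Real.pi / 2))..(Real.pi / 2), Complex.exp (((2 * u * θ : ℝ) : ℂ) * Complex.I)
      = ((Real.pi * sinc u : ℝ) : ℂ) := by
  by_cases hu : u = 0
  · simp [hu, sinc]
  have hc : (2 * u * Complex.I : ℂ) ≠ 0 := by simp [hu]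
  have key := integral_exp_mul_complex (a := -(Real.pi / 2)) (b := Real.pi / 2) hc
  have hu' : (u : ℂ) ≠ 0 := by exact_mod_cast hu
  have hpi : (Real.pi : ℂ) ≠ 0 := by exact_mod_cast Real.pi_ne_zero
  calc _ = ∫ θ in (-(Real.pi / 2))..(Real.pi / 2), Complex.exp (2 * u * Complex.I * θ) := by
        congr 1; ext θ; congr 1; push_cast; ring
    _ = _ := by
        rw [key, sinc, if_neg hu]
        push_cast
        rw [Complex.sin]
        have h₁ : (2 * u * Complex.I * (Real.pi / 2) : ℂ) = Real.pi * u * Complex.I := by ring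
        have h₂ : (2 * u * Complex.I * -(Real.pi / 2) : ℂ) = -(Real.pi * u) * Complex.I := by ring
        rw [h₁, h₂]
        field_simp
        rw [Complex.I_sq]
        ring

lemma sinc_neg (x : ℝ) : sinc (-x) = sinc x := by
  simp [sinc]

lemma intervalIntegral_cos_mul_exp_eq_sinc (u : ℝ) :
    ∫ θ in (-(Real.pi / 2))..(Real.pi / 2),
        (Real.cos θ : ℂ) * Complex.exp (((2 * u * θ : ℝ) : ℂ) * Complex.I)
      = ((Real.pi / 2 * (sinc (1 / 2 - u) + sinc (1 / 2 + u)) : ℝ) : ℂ) := by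
  have hsplit : ∀ θ : ℝ, (Real.cos θ : ℂ) * Complex.exp (((2 * u * θ : ℝ) : ℂ) * Complex.I)
      = 1 / 2 * (Complex.exp (((2 * (u - 1 / 2) * θ : ℝ) : ℂ) * Complex.I)
        + Complex.exp (((2 * (1 / 2 + u) * θ : ℝ) : ℂ) * Complex.I)) := by
    intro θ
    have h₁ : ((2 * (u - 1 / 2) * θ : ℝ) : ℂ) * Complex.I
        = -θ * Complex.I + ((2 * u * θ : ℝ) : ℂ) * Complex.I := by push_cast; ring
    have h₂ : ((2 * (1 / 2 + u) * θ : ℝ) : ℂ) * Complex.I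
        = θ * Complex.I + ((2 * u * θ : ℝ) : ℂ) * Complex.I := by push_cast; ring
    rw [h₁, h₂, Complex.exp_add, Complex.exp_add, Complex.ofReal_cos, Complex.cos]
    ring
  simp_rw [hsplit]
  rw [intervalIntegral.integral_const_mul, intervalIntegral.integral_add
    (Continuous.intervalIntegrable (by fun_prop) _ _)
    (Continuous.intervalIntegrable (by fun_prop) _ _),
    intervalIntegral_exp_eq_sinc, intervalIntegral_exp_eq_sinc, ← neg_sub (1 / 2) u, sinc_neg]
  push_cast
  ring

lemma psiML_wigner_integrand {β hb : ℝ} (hβ : 0 < β) (ξ q : ℝ) {a θ : ℝ}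
    (ha : |a| ≤ Real.pi / 4) (hθ : θ ∈ Set.Ioo (-(Real.pi / 2)) (Real.pi / 2)) :
    (starRingEnd ℂ) (psiML β hb ξ
        (ominus β (Real.tan a / √β) (circ β (1 - 1 / 2) (Real.tan θ / √β))))
      * psiML β hb ξ (oplus β (Real.tan a / √β) (circ β (1 / 2) (Real.tan θ / √β)))
      * Complex.exp (Complex.I / hb * q * (Real.arctan (√β * (Real.tan θ / √β)) / √β))
      = ((√β / Real.pi : ℝ) : ℂ) * ((Real.cos (2 * a) + Real.cos θ : ℝ) : ℂ)
        * Complex.exp (((2 * ((q - ξ) / (2 * hb * √β)) * θ : ℝ) : ℂ) * Complex.I) := by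
  have hs : 0 < √β := Real.sqrt_pos.2 hβ
  obtain ⟨ha₁, ha₂⟩ := abs_le.1 ha
  obtain ⟨hθ₁, hθ₂⟩ := hθ
  have hpi := Real.pi_pos
  have hca : Real.cos a ≠ 0 :=
    (Real.cos_pos_of_mem_Ioo ⟨by linarith, by linarith⟩).ne'
  have hch : Real.cos (θ / 2) ≠ 0 :=
    (Real.cos_pos_of_mem_Ioo ⟨by linarith, by linarith⟩).ne'
  have hcirc : circ β (1 / 2) (Real.tan θ / √β) = Real.tan (θ / 2) / √β := by
    rw [circ, mul_div_cancel₀ _ hs.ne', Real.arctan_tan hθ₁ hθ₂, one_div_mul_eq_div,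
      one_div_mul_eq_div]
  have hominus : ominus β (Real.tan a / √β) (Real.tan (θ / 2) / √β)
      = Real.tan (a + -(θ / 2)) / √β := by
    rw [ominus, ← neg_div, ← Real.tan_neg, oplus_tan_div_sqrt hβ hca (by rwa [Real.cos_neg])]
  have hcos : Real.cos (a + -(θ / 2)) * Real.cos (a + θ / 2)
      = (Real.cos (2 * a) + Real.cos θ) / 2 := by
    have h := Real.cos_add_cos (2 * a) θ
    rw [h, show (2 * a + θ) / 2 = a + θ / 2 by ring, show (2 * a - θ) / 2 = a + -(θ / 2) by ring]
    ring
  have hnorm : √(2 * √β / Real.pi) * √(2 * √β / Real.pi) = 2 * (√β / Real.pi) := by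
    rw [Real.mul_self_sqrt (by positivity)]
    ring
  rw [show (1 - 1 / 2 : ℝ) = 1 / 2 by norm_num, hcirc, hominus, oplus_tan_div_sqrt hβ hca hch,
    psiML_tan_div_sqrt hβ hb ξ ⟨by linarith, by linarith⟩,
    psiML_tan_div_sqrt hβ hb ξ ⟨by linarith, by linarith⟩,
    mul_div_cancel₀ _ hs.ne', Real.arctan_tan hθ₁ hθ₂]
  simp only [map_mul, Complex.conj_ofReal, ← Complex.exp_conj, Complex.conj_I]
  have hexp : Complex.exp (((2 * ((q - ξ) / (2 * hb * √β)) * θ : ℝ) : ℂ) * Complex.I)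
      = Complex.exp (((-(ξ * (a + -(θ / 2)) / (hb * √β)) : ℝ) : ℂ) * -Complex.I)
        * Complex.exp (((-(ξ * (a + θ / 2) / (hb * √β)) : ℝ) : ℂ) * Complex.I)
        * Complex.exp (Complex.I / hb * q * (θ / √β)) := by
    rw [← Complex.exp_add, ← Complex.exp_add]
    congr 1
    push_cast
    ring
  have hcoef : ((√β / Real.pi : ℝ) : ℂ) * ((Real.cos (2 * a) + Real.cos θ : ℝ) : ℂ)
      = (√(2 * √β / Real.pi) : ℝ) * (Real.cos (a + -(θ / 2)) : ℝ)
        * ((√(2 * √β / Real.pi) : ℝ) * (Real.cos (a + θ / 2) : ℝ)) := by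
    norm_cast
    rw [mul_mul_mul_comm, hnorm, hcos]
    ring
  rw [hexp, hcoef]
  ring

theorem wigner_maximal_localization (β hb ξ : ℝ) (hβ : 0 < β) (hhb : 0 < hb)
    (q p : ℝ) (hp : β * p ^ 2 ≤ 1) :
    Wig β hb (1 / 2) (psiML β hb ξ) (psiML β hb ξ) q p
      = (((1 - β * p ^ 2) / (1 + β * p ^ 2)
            * sinc ((q - ξ) / (2 * hb * Real.sqrt β))
          + (1 / 2) * (sinc (1 / 2 - (q - ξ) / (2 * hb * Real.sqrt β))
            + sinc (1 / 2 + (q - ξ) / (2 * hb * Real.sqrt β))) : ℝ) : ℂ) := by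
  have hs : 0 < √β := Real.sqrt_pos.2 hβ
  have hsq : √β ^ 2 = β := Real.sq_sqrt hβ.le
  set u := (q - ξ) / (2 * hb * √β) with hu
  set a := Real.arctan (√β * p) with ha
  have hpa : p = Real.tan a / √β := by
    rw [ha, Real.tan_arctan, mul_div_cancel_left₀ _ hs.ne']
  have habs : |a| ≤ Real.pi / 4 := by
    have h : |√β * p| ≤ 1 := by
      rw [← sq_le_one_iff_abs_le_one, mul_pow, hsq]
      exact hp
    rw [abs_le, ← Real.arctan_one, ← Real.arctan_neg]
    exact ⟨Real.arctan_mono (abs_le.1 h).1, Real.arctan_mono (abs_le.1 h).2⟩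
  have hcos : Real.cos (2 * a) = (1 - β * p ^ 2) / (1 + β * p ^ 2) := by
    have hden : 1 + β * p ^ 2 ≠ 0 := by positivity
    rw [Real.cos_two_mul, ha, Real.cos_sq_arctan, mul_pow, hsq]
    field_simp
    ring
  have hpi : -(Real.pi / 2) ≤ Real.pi / 2 := by linarith [Real.pi_pos]
  have hpi₀ : (Real.pi : ℂ) ≠ 0 := by exact_mod_cast Real.pi_ne_zero
  have hs₀ : ((√β : ℝ) : ℂ) ≠ 0 := by exact_mod_cast hs.ne'
  have hW : Wig β hb (1 / 2) (psiML β hb ξ) (psiML β hb ξ) q p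
      = ∫ θ in Set.Ioo (-(Real.pi / 2)) (Real.pi / 2),
          ((Real.cos (2 * a) / Real.pi : ℝ) : ℂ)
              * Complex.exp (((2 * u * θ : ℝ) : ℂ) * Complex.I)
            + ((1 / Real.pi : ℝ) : ℂ) * ((Real.cos θ : ℂ)
              * Complex.exp (((2 * u * θ : ℝ) : ℂ) * Complex.I)) := by
    rw [Wig, integral_gmeasure_eq_setIntegral_tan hβ]
    refine setIntegral_congr_fun measurableSet_Ioo fun θ hθ => ?_
    rw [hpa, psiML_wigner_integrand hβ ξ q habs hθ, ← hu]
    push_cast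
    field_simp
  rw [hW, ← integral_Ioc_eq_integral_Ioo, ← intervalIntegral.integral_of_le hpi,
    intervalIntegral.integral_add (Continuous.intervalIntegrable (by fun_prop) _ _)
      (Continuous.intervalIntegrable (by fun_prop) _ _),
    intervalIntegral.integral_const_mul, intervalIntegral.integral_const_mul,
    intervalIntegral_exp_eq_sinc, intervalIntegral_cos_mul_exp_eq_sinc, ← hcos]
  push_cast
  field_simp
end

section
/- Let β > 0, ħ > 0, ξ ∈ ℝ. Define the position eigenfunction in momentum representation ψ_ξ(p) = √(√β/π)·e^{−(i/ħ)·ξ·arctan(√β p)/√β}. Then for every q ∈ ℝ and every p ∈ ℝ with βp² ≤ 1, the λ = 1/2 Wigner function of ψ_ξ equals the position eigenvector distribution: W_{1/2}(ψ_ξ, ψ_ξ)(q, p) = sinc((q − ξ)/(2ħ√β)). -/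
open MeasureTheory

/-- The position eigenfunction in momentum representation. -/
noncomputable def psiPos (β hb ξ : ℝ) (p : ℝ) : ℂ :=
  (Real.sqrt (Real.sqrt β / Real.pi) : ℝ)
    * Complex.exp (-(Complex.I / hb) * ξ *
        (Real.arctan (Real.sqrt β * p) / Real.sqrt β))

/-- Change of variables `θ = arctan (√β p)` in an integral against `gmeasure β`. -/
theorem integral_comp_arctan_gmeasure {β : ℝ} (hβ : 0 < β) {g : ℝ → ℂ} (hg : Continuous g) :
    ∫ p, g (Real.arctan (√β * p)) ∂(gmeasure β)
      = (1 / √β : ℝ) • ∫ θ in (-(Real.pi / 2))..(Real.pi / 2), g θ := by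
  have hs : 0 < √β := Real.sqrt_pos.2 hβ
  have hsq : √β ^ 2 = β := Real.sq_sqrt hβ.le
  have hpos (p : ℝ) : 0 < 1 + β * p ^ 2 := by positivity
  have hdens : Integrable fun p : ℝ => 1 / (1 + β * p ^ 2) := by
    have h := integrable_inv_one_add_sq.comp_mul_left' hs.ne'
    simpa [mul_pow, hsq] using h
  have hcont : Continuous fun p : ℝ => g (Real.arctan (√β * p)) := by fun_prop
  obtain ⟨C, hC⟩ := (isCompact_Icc (a := -(Real.pi / 2))
    (b := Real.pi / 2)).exists_bound_of_continuousOn hg.continuousOn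
  have hint : Integrable fun p : ℝ => (1 / (1 + β * p ^ 2)) • g (Real.arctan (√β * p)) :=
    hdens.smul_bdd C hcont.aestronglyMeasurable (.of_forall fun p =>
      hC _ ⟨(Real.neg_pi_div_two_lt_arctan _).le, (Real.arctan_lt_pi_div_two _).le⟩)
  let G : ℝ → ℂ := fun t => ∫ θ in (0 : ℝ)..t, g θ
  have hGd (t : ℝ) : HasDerivAt G (g t) t :=
    intervalIntegral.integral_hasDerivAt_right (hg.intervalIntegrable _ _)
      (hg.stronglyMeasurableAtFilter _ _) hg.continuousAt
  have hGc : Continuous G := continuous_iff_continuousAt.2 fun t => (hGd t).continuousAt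
  have hF (p : ℝ) : HasDerivAt (fun p => (1 / √β : ℝ) • G (Real.arctan (√β * p)))
      ((1 / (1 + β * p ^ 2)) • g (Real.arctan (√β * p))) p := by
    have h₁ : HasDerivAt (fun p => Real.arctan (√β * p))
        (1 / (1 + (√β * p) ^ 2) * (√β * 1)) p :=
      ((hasDerivAt_id p).const_mul (√β)).arctan
    refine (((hGd _).scomp p h₁).const_smul (1 / √β : ℝ)).congr_deriv ?_
    rw [smul_smul, mul_pow, hsq]
    congr 1
    field_simp
  have htop : Filter.Tendsto (fun p => (1 / √β : ℝ) • G (Real.arctan (√β * p))) Filter.atTop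
      (nhds ((1 / √β : ℝ) • G (Real.pi / 2))) :=
    ((hGc.tendsto _).comp ((Real.tendsto_arctan_atTop.mono_right nhdsWithin_le_nhds).comp
      (Filter.tendsto_id.const_mul_atTop hs))).const_smul _
  have hbot : Filter.Tendsto (fun p => (1 / √β : ℝ) • G (Real.arctan (√β * p))) Filter.atBot
      (nhds ((1 / √β : ℝ) • G (-(Real.pi / 2)))) :=
    ((hGc.tendsto _).comp ((Real.tendsto_arctan_atBot.mono_right nhdsWithin_le_nhds).comp
      (Filter.tendsto_id.const_mul_atBot hs))).const_smul _
  rw [gmeasure, integral_withDensity_eq_integral_toReal_smul (by fun_prop)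
    (.of_forall fun _ => ENNReal.ofReal_lt_top)]
  simp_rw [ENNReal.toReal_ofReal (one_div_pos.2 (hpos _)).le]
  rw [integral_of_hasDerivAt_of_tendsto hF hint hbot htop, ← smul_sub,
    intervalIntegral.integral_interval_sub_left (hg.intervalIntegrable _ _)
      (hg.intervalIntegrable _ _)]

/-- The Fourier integral of the indicator of `[-π/2, π/2]`. -/
theorem integral_exp_I_mul_eq_sinc (c : ℝ) :
    ∫ θ in (-(Real.pi / 2))..(Real.pi / 2), Complex.exp (Complex.I * c * θ)
      = Real.pi * (sinc (c / 2) : ℝ) := by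
  rcases eq_or_ne c 0 with rfl | hc
  · simp [sinc]
  · have hc' : (c : ℂ) ≠ 0 := by exact_mod_cast hc
    have hpi : (Real.pi : ℂ) ≠ 0 := by exact_mod_cast Real.pi_ne_zero
    rw [integral_exp_mul_complex (mul_ne_zero Complex.I_ne_zero hc'), sinc,
      if_neg (div_ne_zero hc two_ne_zero)]
    push_cast
    rw [Complex.sin]
    have h₁ : Complex.I * c * (Real.pi / 2) = Real.pi * (c / 2) * Complex.I := by ring
    have h₂ : Complex.I * c * -(Real.pi / 2) = -(Real.pi * (c / 2)) * Complex.I := by ring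
    rw [h₁, h₂]
    field_simp
    rw [Complex.I_sq]
    ring

/-- `√β (x ⊕ y) = tan (a + b)` when `√β x = tan a` and `√β y = tan b`, read through `arctan`. -/
theorem arctan_sqrt_mul_oplus {β : ℝ} (hβ : 0 < β) {a b : ℝ}
    (ha : |a| ≤ Real.pi / 4) (hb : |b| < Real.pi / 4) :
    Real.arctan (√β * oplus β (1 / √β * Real.tan a) (1 / √β * Real.tan b)) = a + b := by
  have hs : 0 < √β := Real.sqrt_pos.2 hβ
  have hsq : √β ^ 2 = β := Real.sq_sqrt hβ.le
  rw [abs_le] at ha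
  rw [abs_lt] at hb
  have hpi := Real.pi_pos
  have hca : Real.cos a ≠ 0 := (Real.cos_pos_of_mem_Ioo ⟨by linarith, by linarith⟩).ne'
  have hcb : Real.cos b ≠ 0 := (Real.cos_pos_of_mem_Ioo ⟨by linarith, by linarith⟩).ne'
  have htan : Real.tan (a + b)
      = (Real.tan a + Real.tan b) / (1 - Real.tan a * Real.tan b) :=
    Real.tan_add' ⟨fun k h => hca (Real.cos_eq_zero_iff.2 ⟨k, h⟩),
      fun k h => hcb (Real.cos_eq_zero_iff.2 ⟨k, h⟩)⟩
  have hmul : √β * oplus β (1 / √β * Real.tan a) (1 / √β * Real.tan b) = Real.tan (a + b) := by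
    have h : β * (1 / √β * Real.tan a) * (1 / √β * Real.tan b) = Real.tan a * Real.tan b := by
      nth_rewrite 1 [← hsq]
      field_simp
    rw [htan, oplus, h, ← mul_add, ← mul_div_assoc, ← mul_assoc, mul_one_div_cancel hs.ne', one_mul]
  rw [hmul, Real.arctan_tan (by linarith) (by linarith)]

/-- The product of the two shifted position eigenfunctions depends only on `p'`. -/
theorem conj_psiPos_mul_psiPos {β : ℝ} (hβ : 0 < β) (hb ξ : ℝ) {p : ℝ} (hp : β * p ^ 2 ≤ 1)
    (p' : ℝ) :
    (starRingEnd ℂ) (psiPos β hb ξ (ominus β p (circ β (1 / 2) p')))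
        * psiPos β hb ξ (oplus β p (circ β (1 / 2) p'))
      = (√β / Real.pi : ℝ) * Complex.exp (-(Complex.I / hb) * ξ *
          (Real.arctan (√β * p') / √β)) := by
  have hs : 0 < √β := Real.sqrt_pos.2 hβ
  have hsq : √β ^ 2 = β := Real.sq_sqrt hβ.le
  set a := Real.arctan (√β * p) with ha_def
  set θ := Real.arctan (√β * p') with hθ_def
  have hpa : p = 1 / √β * Real.tan a := by
    rw [ha_def, Real.tan_arctan]
    field_simp
  have hle : |√β * p| ≤ 1 := by
    rw [← sq_le_one_iff_abs_le_one, mul_pow, hsq]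
    exact hp
  have ha : |a| ≤ Real.pi / 4 := by
    rw [abs_le] at hle ⊢
    rw [← Real.arctan_one, ← Real.arctan_neg]
    exact ⟨Real.arctan_mono hle.1, Real.arctan_mono hle.2⟩
  have hθ : |1 / 2 * θ| < Real.pi / 4 := by
    have h₁ := Real.neg_pi_div_two_lt_arctan (√β * p')
    have h₂ := Real.arctan_lt_pi_div_two (√β * p')
    rw [abs_lt]
    constructor <;> linarith
  have hplus : Real.arctan (√β * oplus β p (circ β (1 / 2) p')) = a + 1 / 2 * θ := by
    rw [hpa, circ]
    exact arctan_sqrt_mul_oplus hβ ha hθ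
  have hminus : Real.arctan (√β * ominus β p (circ β (1 / 2) p')) = a + -(1 / 2 * θ) := by
    rw [hpa, ominus, circ, ← mul_neg, ← Real.tan_neg]
    exact arctan_sqrt_mul_oplus hβ ha (by rwa [abs_neg])
  have hnorm : ((√(√β / Real.pi) : ℝ) : ℂ) * (√(√β / Real.pi) : ℝ) = (√β / Real.pi : ℝ) := by
    rw [← Complex.ofReal_mul, Real.mul_self_sqrt (by positivity)]
  rw [psiPos, psiPos, hplus, hminus, map_mul, ← Complex.exp_conj, Complex.conj_ofReal,
    mul_mul_mul_comm, hnorm, ← Complex.exp_add]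
  simp only [map_mul, map_neg, map_div₀, Complex.conj_I, Complex.conj_ofReal]
  congr 2
  push_cast
  ring

theorem wigner_position_eigenvector (β hb ξ : ℝ) (hβ : 0 < β) (hhb : 0 < hb)
    (q p : ℝ) (hp : β * p ^ 2 ≤ 1) :
    Wig β hb (1 / 2) (psiPos β hb ξ) (psiPos β hb ξ) q p
      = ((sinc ((q - ξ) / (2 * hb * Real.sqrt β)) : ℝ) : ℂ) := by
  have hs : 0 < √β := Real.sqrt_pos.2 hβ
  have hs' : (√β : ℂ) ≠ 0 := by exact_mod_cast hs.ne'
  have hh' : (hb : ℂ) ≠ 0 := by exact_mod_cast hhb.ne'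
  have hpi : (Real.pi : ℂ) ≠ 0 := by exact_mod_cast Real.pi_ne_zero
  set c : ℝ := (q - ξ) / (hb * √β) with hc
  have hint (p' : ℝ) :
      (starRingEnd ℂ) (psiPos β hb ξ (ominus β p (circ β (1 - 1 / 2) p')))
          * psiPos β hb ξ (oplus β p (circ β (1 / 2) p'))
          * Complex.exp (Complex.I / hb * q * (Real.arctan (√β * p') / √β))
        = (√β / Real.pi : ℝ) * Complex.exp (Complex.I * c * Real.arctan (√β * p')) := by
    rw [sub_half, conj_psiPos_mul_psiPos hβ hb ξ hp, mul_assoc, ← Complex.exp_add, hc]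
    congr 2
    push_cast
    field_simp
    ring
  rw [Wig]
  simp_rw [hint]
  rw [integral_const_mul,
    integral_comp_arctan_gmeasure (g := fun θ : ℝ => Complex.exp (Complex.I * c * θ)) hβ
      (by fun_prop), integral_exp_I_mul_eq_sinc,
    show (q - ξ) / (2 * hb * √β) = c / 2 by rw [hc]; field_simp, Complex.real_smul]
  push_cast
  field_simp
end
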